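/- For every ε ∈ (0,1) there exist positive integers c_1 and c_2 with the following property. For every integer n ≥ 2 there is a set S(ε,n) of at most c_1·log(n) rooted trees such that every connected component of every (ε,⌈1/ε⌉)-clean forest of order n, rooted at its designated root, is isomorphic as a rooted tree to a member of S(ε,n); moreover, if S_1,...,S_q is any linear ordering of the elements of S(ε,n) such that the degrees d_i of the roots of the S_i are non-decreasing along the ordering, then d_i ≤ ε·d_j for all i, j ∈ {1,...,q} with j ≥ i + c_2. -/

import Mathlib

/-!
A component of a forest, rooted at `r`, is determined up to rooted isomorphism by the multiset of
rooted branches hanging at `r`, hence by the degree `d` of `r` and the multiplicities of the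
branches with at least two vertices; the number of leaf neighbors of `r` is what remains of `d`
(`exists_rooted_iso`). In a clean component, branches have at most `Δ` vertices, so there are
boundedly many types, and each multiplicity is a multiple of `branchDivisor ε Δ d` and is at most
`d`. The quotient is therefore bounded in terms of `ε` alone (`exists_quotient_le`), and boundedly
many, say `M`, trees share a given root degree. These data are stored as a code
(`HasCode`), and `S(ε,n)` consists of one representative for each code occurring in order `n`.

It remains to count degrees: the powers of `1 + ε` grow geometrically, so `D(ε,Δ)` has `O(log n)`
elements up to `n` (`exists_card_le_mul_log`) and a bounded number in every window `[a, a / ε)`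
(`exists_card_window_le`). If `d_i > ε * d_j` with `i < j`, all trees listed between `i` and `j`
have degrees in `[d_i, d_i / ε)`, so `j - i` is smaller than this number times `M`.
-/

universe u

/-- `rootedCount G r S T t` is the number of connected components `L` of the subgraph
of `G` induced on `S` that contain a neighbor `u` of `r` and are isomorphic, as trees
rooted in this neighbor `u`, to the tree `T` rooted in `t` (an isomorphism of rooted
trees is a graph isomorphism mapping root to root). -/
noncomputable def rootedCount {V : Type u} (G : SimpleGraph V) (r : V) (S : Set V)
    {k : ℕ} (T : SimpleGraph (Fin k)) (t : Fin k) : ℕ :=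
  Nat.card { c : (G.induce S).ConnectedComponent //
    ∃ (u : S) (hu : u ∈ c.supp) (φ : (G.induce S).induce c.supp ≃g T),
      G.Adj r ↑u ∧ φ ⟨u, hu⟩ = t }

/-- `r` is a root witnessing `(ε,Δ)`-cleanness of the component `K` of the forest `F`:
(i) every component of `K − r` has at most `Δ` vertices, (ii) the degree of `r` in `F`
lies in `D(ε,Δ) = {0,…,Δ} ∪ {⌈(1+ε)^i⌉ : i ∈ ℕ}`, and (iii) for every rooted tree `T`
with at least two vertices, the number of components of `K − r`, considered as trees
rooted in the neighbor of `r`, isomorphic to `T` as rooted trees is a multiple of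
`max 1 ⌊ε·d_F(r)/(Δ·C(2Δ,Δ))⌋`. -/
def IsCleanRoot (ε : ℝ) (Δ : ℕ) {V : Type u} (F : SimpleGraph V)
    (K : F.ConnectedComponent) (r : V) : Prop :=
  r ∈ K.supp ∧
  (∀ c : (F.induce (K.supp \ {r})).ConnectedComponent, Nat.card c.supp ≤ Δ) ∧
  (Nat.card (F.neighborSet r) ≤ Δ ∨
    ∃ i : ℕ, (Nat.card (F.neighborSet r) : ℤ) = ⌈(1 + ε) ^ i⌉) ∧
  (∀ (k : ℕ), 2 ≤ k → ∀ T : SimpleGraph (Fin k), T.IsTree → ∀ t : Fin k,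
    max 1 ⌊ε * (Nat.card (F.neighborSet r)) / (Δ * (2 * Δ).choose Δ)⌋₊ ∣
      rootedCount F r (K.supp \ {r}) T t)

/-- A forest `F` is `(ε,Δ)`-clean if every connected component has a root vertex
witnessing the three cleanness conditions. -/
def IsClean (ε : ℝ) (Δ : ℕ) {V : Type u} (F : SimpleGraph V) : Prop :=
  ∀ K : F.ConnectedComponent, ∃ r, IsCleanRoot ε Δ F K r

/-! ### Counting admissible degrees -/

/-- The set `D(ε,Δ) = {0,…,Δ} ∪ {⌈(1+ε)^i⌉ : i ∈ ℕ}` of admissible root degrees. -/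
def admissibleDegrees (ε : ℝ) (Δ : ℕ) : Set ℕ :=
  {d | d ≤ Δ ∨ ∃ i : ℕ, (d : ℤ) = ⌈(1 + ε) ^ i⌉}

/-- The divisor `max 1 ⌊ε·d/(Δ·C(2Δ,Δ))⌋` of the branch multiplicities at a root of degree `d`. -/
noncomputable def branchDivisor (ε : ℝ) (Δ d : ℕ) : ℕ :=
  max 1 ⌊ε * d / (Δ * (2 * Δ).choose Δ)⌋₊

/-- A finite set of admissible degrees has at most `Δ + 1` elements besides those coming from
exponents in `I`. -/
theorem card_le_of_exponents {ε : ℝ} {Δ : ℕ} (s : Finset ℕ)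
    (hs : ∀ d ∈ s, d ∈ admissibleDegrees ε Δ) (I : Finset ℕ)
    (hI : ∀ d ∈ s, ∀ i : ℕ, (d : ℤ) = ⌈(1 + ε) ^ i⌉ → i ∈ I) :
    s.card ≤ Δ + 1 + I.card := by
  have hsub : s ⊆ Finset.range (Δ + 1) ∪ I.image (fun i => ⌈(1 + ε) ^ i⌉.toNat) := by
    intro d hd
    rw [Finset.mem_union]
    rcases hs d hd with h | ⟨i, hi⟩
    · exact Or.inl (Finset.mem_range.2 (by omega))
    · exact Or.inr (Finset.mem_image.2 ⟨i, hI d hd i hi, by rw [← hi]; simp⟩)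
  calc s.card ≤ _ := Finset.card_le_card hsub
    _ ≤ _ := Finset.card_union_le _ _
    _ ≤ _ := by
      rw [Finset.card_range]
      exact Nat.add_le_add_left Finset.card_image_le _

/-- Boundedly many admissible degrees `d` satisfy `a ≤ d < a / ε`. -/
theorem exists_card_window_le {ε : ℝ} (hε : ε ∈ Set.Ioo (0 : ℝ) 1) (Δ : ℕ) :
    ∃ C : ℕ, 0 < C ∧ ∀ (a : ℕ) (s : Finset ℕ),
      (∀ d ∈ s, d ∈ admissibleDegrees ε Δ ∧ a ≤ d ∧ ε * d < a) → s.card ≤ C := by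
  obtain ⟨h0, h1⟩ := hε
  obtain ⟨L, hL⟩ := pow_unbounded_of_one_lt (2 / ε) (by linarith : 1 < 1 + ε)
  refine ⟨Δ + 1 + L, by omega, fun a s hs => ?_⟩
  have hex : ∃ i : ℕ, (a : ℤ) ≤ ⌈(1 + ε) ^ i⌉ := by
    obtain ⟨i, hi⟩ := pow_unbounded_of_one_lt (a : ℝ) (by linarith : 1 < 1 + ε)
    refine ⟨i, ?_⟩
    have : ((a : ℤ) : ℝ) ≤ (⌈(1 + ε) ^ i⌉ : ℤ) := by
      push_cast
      exact hi.le.trans (Int.le_ceil _)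
    exact_mod_cast this
  -- From the least exponent `i₀` reaching `a`, where `(1 + ε) ^ i₀ ≥ a / 2`, at most `L` more steps
  -- multiply by `2 / ε` and leave the window.
  classical
  have key := card_le_of_exponents s (fun d hd => (hs d hd).1)
    (Finset.Ico (Nat.find hex) (Nat.find hex + L)) ?_
  · simpa using key
  intro d hd i hi
  obtain ⟨-, h2, h3⟩ := hs d hd
  rw [Finset.mem_Ico]
  have hmin : Nat.find hex ≤ i := Nat.find_min' hex (by rw [← hi]; exact_mod_cast h2)
  refine ⟨hmin, ?_⟩
  have hspec := Nat.find_spec hex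
  set i₀ := Nat.find hex
  have hA : (1 : ℝ) ≤ (1 + ε) ^ i₀ := one_le_pow₀ (by linarith)
  have hB : (a : ℝ) < (1 + ε) ^ i₀ + 1 := by
    have : ((a : ℤ) : ℝ) ≤ (⌈(1 + ε) ^ i₀⌉ : ℤ) := by exact_mod_cast hspec
    push_cast at this
    exact this.trans_lt (Int.ceil_lt_add_one _)
  have hC : (1 + ε) ^ i ≤ (d : ℝ) := by
    have : ((d : ℤ) : ℝ) = (⌈(1 + ε) ^ i⌉ : ℤ) := by rw [hi]
    push_cast at this
    rw [this]; exact Int.le_ceil _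
  by_contra hcon
  have hD : (1 + ε) ^ (i₀ + L) ≤ (1 + ε) ^ i := pow_le_pow_right₀ (by linarith) (by omega)
  rw [pow_add] at hD
  have hE : 2 < ε * (1 + ε) ^ L := by
    rw [div_lt_iff₀ h0] at hL; linarith
  have : (1 + ε) ^ i₀ * 2 < (1 + ε) ^ i₀ * (ε * (1 + ε) ^ L) := by gcongr
  have h4 : ε * ((1 + ε) ^ i₀ * (1 + ε) ^ L) ≤ ε * d := by gcongr; linarith
  nlinarith

/-- There are `O(log n)` admissible degrees up to `n`. -/
theorem exists_card_le_mul_log {ε : ℝ} (hε : ε ∈ Set.Ioo (0 : ℝ) 1) (Δ : ℕ) :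
    ∃ C : ℕ, 0 < C ∧ ∀ (n : ℕ), 2 ≤ n → ∀ (s : Finset ℕ),
      (∀ d ∈ s, d ∈ admissibleDegrees ε Δ ∧ d ≤ n) → (s.card : ℝ) ≤ C * Real.log n := by
  obtain ⟨h0, h1⟩ := hε
  have hl : 0 < Real.log (1 + ε) := Real.log_pos (by linarith)
  have hl2 : 0 < Real.log 2 := Real.log_pos (by norm_num)
  refine ⟨⌈(Δ + 2) / Real.log 2 + 1 / Real.log (1 + ε)⌉₊, Nat.ceil_pos.2 (by positivity),
    fun n hn s hs => ?_⟩
  have hn' : Real.log 2 ≤ Real.log n :=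
    Real.log_le_log (by norm_num) (by exact_mod_cast hn)
  have key := card_le_of_exponents s (fun d hd => (hs d hd).1)
    (Finset.range (⌊Real.log n / Real.log (1 + ε)⌋₊ + 1)) ?_
  · rw [Finset.card_range] at key
    have key' : (s.card : ℝ) ≤ Δ + 1 + (⌊Real.log n / Real.log (1 + ε)⌋₊ + 1) := by
      exact_mod_cast key
    have hf := Nat.floor_le (a := Real.log n / Real.log (1 + ε))
      (div_nonneg (by linarith) hl.le)
    have hg : ((Δ : ℝ) + 2) ≤ (Δ + 2) / Real.log 2 * Real.log n := by
      rw [div_mul_eq_mul_div, le_div_iff₀ hl2]; gcongr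
    calc (s.card : ℝ) ≤ ((Δ + 2) / Real.log 2 + 1 / Real.log (1 + ε)) * Real.log n := by
          rw [add_mul, one_div_mul_eq_div]; linarith
      _ ≤ _ := by gcongr; exact Nat.le_ceil _
  intro d hd i hi
  rw [Finset.mem_range, Nat.lt_succ_iff]
  apply Nat.le_floor
  rw [le_div_iff₀ hl, ← Real.log_pow]
  apply Real.log_le_log (by positivity)
  have : ((d : ℤ) : ℝ) = (⌈(1 + ε) ^ i⌉ : ℤ) := by rw [hi]
  push_cast at this
  calc (1 + ε) ^ i ≤ _ := Int.le_ceil _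
    _ = (d : ℝ) := this.symm
    _ ≤ n := by exact_mod_cast (hs d hd).2

/-- A multiple of `branchDivisor ε Δ d` that is at most `d` has bounded quotient, since the divisor
is at least half of `ε·d/(Δ·C(2Δ,Δ))`. -/
theorem exists_quotient_le {ε : ℝ} (hε : ε ∈ Set.Ioo (0 : ℝ) 1) (Δ : ℕ) (hΔ : 0 < Δ) :
    ∃ B : ℕ, ∀ d j : ℕ, branchDivisor ε Δ d * j ≤ d → j ≤ B := by
  obtain ⟨h0, h1⟩ := hε
  have hc : (0 : ℝ) < Δ * (2 * Δ).choose Δ := by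
    have := Nat.choose_pos (show Δ ≤ 2 * Δ by omega)
    positivity
  refine ⟨⌈2 * (Δ * (2 * Δ).choose Δ) / ε⌉₊, fun d j h => ?_⟩
  set m := branchDivisor ε Δ d with hm
  have hm1 : 1 ≤ m := le_max_left _ _
  have hm2 : ⌊ε * d / (Δ * (2 * Δ).choose Δ)⌋₊ ≤ m := le_max_right _ _
  have hx := Nat.lt_floor_add_one (ε * d / (Δ * (2 * Δ).choose Δ))
  have hx2 : ε * d / (Δ * (2 * Δ).choose Δ) < 2 * m := by
    have h1' : (1 : ℝ) ≤ m := by exact_mod_cast hm1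
    have h2' : ((⌊ε * d / (Δ * (2 * Δ).choose Δ)⌋₊ : ℕ) : ℝ) ≤ m := by exact_mod_cast hm2
    linarith
  rw [div_lt_iff₀ hc] at hx2
  have h' : (m : ℝ) * j ≤ d := by exact_mod_cast h
  have hmpos : (0 : ℝ) < m := by exact_mod_cast hm1
  have : (j : ℝ) ≤ 2 * (Δ * (2 * Δ).choose Δ) / ε := by
    rw [le_div_iff₀ h0]
    have : ε * (m * j) ≤ ε * d := by gcongr
    have h5 : (m : ℝ) * (j * ε) ≤ m * (2 * (Δ * (2 * Δ).choose Δ)) := by nlinarith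
    exact le_of_mul_le_mul_left h5 hmpos
  exact_mod_cast this.trans (Nat.le_ceil _)

/-! ### Rooted components are determined by their branches -/

/-- Two maps with fibers of equal size differ by a bijection of their domains. -/
theorem exists_equiv_of_card_fiber_eq {A A' Q : Type*} [Finite A] [Finite A'] (f : A → Q)
    (f' : A' → Q) (h : ∀ q, Nat.card {a // f a = q} = Nat.card {a // f' a = q}) :
    ∃ e : A ≃ A', ∀ a, f' (e a) = f a := by
  have e0 : ∀ q, {a // f a = q} ≃ {a // f' a = q} := fun q => Classical.choice (Finite.card_eq.1 (h q))
  refine ⟨(Equiv.sigmaFiberEquiv f).symm.trans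
    ((Equiv.sigmaCongrRight e0).trans (Equiv.sigmaFiberEquiv f')), fun a => ?_⟩
  exact (e0 (f a) ⟨a, rfl⟩).2

/-- For maps on domains of equal size, agreement of all fiber sizes except one forces agreement
of the last. This recovers the number of leaf neighbors of a root from its degree. -/
theorem card_fiber_eq_of_card_eq {A A' Q : Type*} [Finite A] [Finite A'] (f : A → Q)
    (f' : A' → Q) (hcard : Nat.card A = Nat.card A') (q₀ : Q)
    (h : ∀ q, q ≠ q₀ → Nat.card {a // f a = q} = Nat.card {a // f' a = q}) :
    Nat.card {a // f a = q₀} = Nat.card {a // f' a = q₀} := by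
  classical
  have := Fintype.ofFinite A
  have := Fintype.ofFinite A'
  simp only [Nat.card_eq_fintype_card, Fintype.card_subtype] at *
  set t : Finset Q := insert q₀ (Finset.univ.image f ∪ Finset.univ.image f')
  have h1 := Finset.card_eq_sum_card_fiberwise (f := f) (s := Finset.univ) (t := t)
    (fun a _ => by simp [t])
  have h2 := Finset.card_eq_sum_card_fiberwise (f := f') (s := Finset.univ) (t := t)
    (fun a _ => by simp [t])
  have hq : q₀ ∈ t := by simp [t]
  rw [← Finset.add_sum_erase _ _ hq] at h1 h2
  have h3 := Finset.sum_congr rfl (fun q (hq : q ∈ t.erase q₀) => h q (Finset.ne_of_mem_erase hq))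
  rw [Finset.card_univ] at h1 h2
  omega

section Gluing
variable {V V' : Type u}

/-- A walk towards `r` inside `A` meets a neighbor of `r` before it meets `r`. -/
theorem exists_adj_reachable (F : SimpleGraph V) (A : Set V) (hA : ∀ x y, x ∈ A → F.Adj x y → y ∈ A)
    (r : V) {x y : V} (p : F.Walk x y) (hy : y = r) (hx : x ∈ A \ {r}) :
    ∃ u : ↑(A \ {r}), F.Adj r u ∧ (F.induce (A \ {r})).Reachable ⟨x, hx⟩ u := by
  induction p with
  | nil => exact absurd hy hx.2
  | @cons x y z h p ih =>
    by_cases hyr : y = r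
    · subst hyr
      exact ⟨⟨x, hx⟩, h.symm, SimpleGraph.Reachable.refl _⟩
    · have hy' : y ∈ A \ {r} := ⟨hA x y hx.1 h, hyr⟩
      obtain ⟨u, hu, hru⟩ := ih hy hy'
      refine ⟨u, hu, SimpleGraph.Reachable.trans (SimpleGraph.Adj.reachable ?_) hru⟩
      exact h

/-- Two neighbors of `r` in the same branch coincide: otherwise the edge to one of them would not
be a bridge. -/
theorem eq_of_adj_of_reachable {F : SimpleGraph V} (hF : F.IsAcyclic) (A : Set V) (r : V)
    {u v : ↑(A \ {r})} (hu : F.Adj r u) (hv : F.Adj r v)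
    (huv : (F.induce (A \ {r})).Reachable u v) : u = v := by
  by_contra hne
  have hb := SimpleGraph.isAcyclic_iff_forall_adj_isBridge.1 hF hu
  rw [SimpleGraph.isBridge_iff] at hb
  have hur : (u : V) ≠ r := u.2.2
  have hvr : (v : V) ≠ r := v.2.2
  have hne' : (v : V) ≠ u := fun h => hne (Subtype.ext h.symm)
  let g : F.induce (A \ {r}) →g F \ SimpleGraph.fromEdgeSet {s(r, (u : V))} :=
    { toFun := Subtype.val
      map_rel' := by
        intro a b hab
        have hab' : F.Adj a b := hab
        have ha : (a : V) ≠ r := a.2.2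
        have hb : (b : V) ≠ r := b.2.2
        rw [SimpleGraph.sdiff_adj]
        refine ⟨hab', ?_⟩
        simp [ha, hb] }
  refine hb (SimpleGraph.Reachable.trans (SimpleGraph.Adj.reachable ?_) (huv.symm.map g))
  change (F \ SimpleGraph.fromEdgeSet {s(r, (u : V))}).Adj r v
  rw [SimpleGraph.sdiff_adj]
  refine ⟨hv, ?_⟩
  simp [hne', hur.symm]

/-- In a forest, every branch at `r` contains exactly one neighbor of `r`. -/
theorem existsUnique_neighbor {F : SimpleGraph V} (hF : F.IsAcyclic) (K : F.ConnectedComponent)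
    {r : V} (hr : r ∈ K.supp) (c : (F.induce (K.supp \ {r})).ConnectedComponent) :
    ∃! u : ↑(K.supp \ {r}), u ∈ c.supp ∧ F.Adj r u := by
  induction c using SimpleGraph.ConnectedComponent.ind with | _ x => ?_
  have hreach : F.Reachable x r :=
    SimpleGraph.ConnectedComponent.exact (x.2.1.trans hr.symm)
  obtain ⟨p⟩ := hreach
  obtain ⟨u, hu, hxu⟩ := exists_adj_reachable F K.supp
    (fun a b ha hab => (SimpleGraph.ConnectedComponent.sound hab.symm.reachable).trans ha) r p rfl x.2
  refine ⟨u, ⟨SimpleGraph.ConnectedComponent.sound hxu.symm, hu⟩, ?_⟩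
  rintro v ⟨hv, hrv⟩
  exact eq_of_adj_of_reachable hF _ r hrv hu
    ((SimpleGraph.ConnectedComponent.exact hv).trans hxu)

/-- The rooted isomorphism types, as rooted graphs on some `Fin k`, of the branch `c` at `r`,
where `c` is rooted at a neighbor of `r`. Since the set is closed under rooted isomorphism, it
serves as the name of a rooted isomorphism class. -/
def branchType (G : SimpleGraph V) (r : V) (S : Set V) (c : (G.induce S).ConnectedComponent) :
    Set (Σ k : ℕ, SimpleGraph (Fin k) × Fin k) :=
  {p | ∃ (u : S) (hu : u ∈ c.supp) (φ : (G.induce S).induce c.supp ≃g p.2.1),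
      G.Adj r ↑u ∧ φ ⟨u, hu⟩ = p.2.2}

theorem rootedCount_eq (G : SimpleGraph V) (r : V) (S : Set V) {k : ℕ} (T : SimpleGraph (Fin k))
    (t : Fin k) :
    rootedCount G r S T t = Nat.card {c // (⟨k, T, t⟩ : Σ k : ℕ, SimpleGraph (Fin k) × Fin k) ∈
      branchType G r S c} := rfl

theorem exists_mem_branchType [Finite V] {G : SimpleGraph V} {r : V} {S : Set V}
    (h : ∀ c : (G.induce S).ConnectedComponent, ∃! u : S, u ∈ c.supp ∧ G.Adj r u)
    (c : (G.induce S).ConnectedComponent) : ∃ p, p ∈ branchType G r S c := by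
  obtain ⟨u, ⟨hu, hru⟩, -⟩ := h c
  obtain e := Finite.equivFin c.supp
  exact ⟨⟨_, ((G.induce S).induce c.supp).map e.toEmbedding, e ⟨u, hu⟩⟩, u, hu,
    SimpleGraph.Iso.map e _, hru, rfl⟩

/-- Two branches sharing one rooted type are isomorphic by an isomorphism matching the neighbors
of the roots. -/
theorem exists_iso_of_mem_branchType {G : SimpleGraph V} {r : V} {S : Set V}
    {G' : SimpleGraph V'} {r' : V'} {S' : Set V'}
    (h : ∀ c : (G.induce S).ConnectedComponent, ∃! u : S, u ∈ c.supp ∧ G.Adj r u)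
    (h' : ∀ c : (G'.induce S').ConnectedComponent, ∃! u : S', u ∈ c.supp ∧ G'.Adj r' u)
    {c : (G.induce S).ConnectedComponent} {c' : (G'.induce S').ConnectedComponent}
    {p} (hp : p ∈ branchType G r S c) (hp' : p ∈ branchType G' r' S' c') :
    ∃ φ : (G.induce S).induce c.supp ≃g (G'.induce S').induce c'.supp,
      ∀ x, G.Adj r x.1 ↔ G'.Adj r' (φ x).1 := by
  obtain ⟨u, hu, φ, hru, hφ⟩ := hp
  obtain ⟨u', hu', φ', hru', hφ'⟩ := hp'
  have hkey : ∀ x : c.supp, G.Adj r x.1 ↔ x = ⟨u, hu⟩ := fun x =>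
    ⟨fun hx => Subtype.ext ((h c).unique ⟨x.2, hx⟩ ⟨hu, hru⟩), fun hx => by rw [hx]; exact hru⟩
  have hkey' : ∀ x : c'.supp, G'.Adj r' x.1 ↔ x = ⟨u', hu'⟩ := fun x =>
    ⟨fun hx => Subtype.ext ((h' c').unique ⟨x.2, hx⟩ ⟨hu', hru'⟩),
      fun hx => by rw [hx]; exact hru'⟩
  refine ⟨φ.trans φ'.symm, fun x => ?_⟩
  rw [hkey, hkey']
  have h1 : φ'.symm (φ ⟨u, hu⟩) = ⟨u', hu'⟩ := by
    rw [hφ, ← hφ']; exact φ'.symm_apply_apply _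
  rw [← h1]
  exact ((φ.trans φ'.symm).injective.eq_iff (a := x) (b := ⟨u, hu⟩)).symm

theorem branchType_eq_of_mem {G : SimpleGraph V} {r : V} {S : Set V}
    {G' : SimpleGraph V'} {r' : V'} {S' : Set V'}
    (h : ∀ c : (G.induce S).ConnectedComponent, ∃! u : S, u ∈ c.supp ∧ G.Adj r u)
    (h' : ∀ c : (G'.induce S').ConnectedComponent, ∃! u : S', u ∈ c.supp ∧ G'.Adj r' u)
    {c : (G.induce S).ConnectedComponent} {c' : (G'.induce S').ConnectedComponent}
    {p} (hp : p ∈ branchType G r S c) (hp' : p ∈ branchType G' r' S' c') :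
    branchType G r S c = branchType G' r' S' c' := by
  obtain ⟨φ, hφ⟩ := exists_iso_of_mem_branchType h h' hp hp'
  ext p
  constructor
  · rintro ⟨u, hu, ψ, hru, hψ⟩
    refine ⟨(φ ⟨u, hu⟩).1, (φ ⟨u, hu⟩).2, φ.symm.trans ψ, (hφ _).1 hru, ?_⟩
    rw [← hψ]
    exact congrArg ψ (φ.symm_apply_apply _)
  · rintro ⟨u, hu, ψ, hru, hψ⟩
    refine ⟨(φ.symm ⟨u, hu⟩).1, (φ.symm ⟨u, hu⟩).2, φ.trans ψ, (hφ _).2 ?_, ?_⟩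
    · have : φ (φ.symm ⟨u, hu⟩) = ⟨u, hu⟩ := φ.apply_symm_apply _
      exact (congrArg (fun x => G'.Adj r' x.1) this).mpr hru
    · rw [← hψ]
      exact congrArg ψ (φ.apply_symm_apply _)

/-- Isomorphisms between matched components assemble to an isomorphism of the whole graphs. -/
theorem exists_iso_of_components {W W' : Type*} (H : SimpleGraph W) (H' : SimpleGraph W')
    (e : H.ConnectedComponent ≃ H'.ConnectedComponent)
    (φ : ∀ c, H.induce c.supp ≃g H'.induce (e c).supp) :
    ∃ ψ : H ≃g H', ∀ c (x : W) (hx : x ∈ c.supp), ψ x = (φ c ⟨x, hx⟩).1 := by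
  let ψ : W ≃ W' := (Equiv.sigmaFiberEquiv H.connectedComponentMk).symm.trans
    ((Equiv.sigmaCongr e (fun c => (φ c).toEquiv)).trans
      (Equiv.sigmaFiberEquiv H'.connectedComponentMk))
  have hψ : ∀ c (x : W) (hx : x ∈ c.supp), ψ x = (φ c ⟨x, hx⟩).1 := by
    intro c x hx
    obtain rfl : H.connectedComponentMk x = c := hx
    rfl
  refine ⟨⟨ψ, ?_⟩, hψ⟩
  intro x y
  by_cases hxy : H.connectedComponentMk y = H.connectedComponentMk x
  · rw [hψ _ x rfl, hψ _ y hxy]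
    exact (φ (H.connectedComponentMk x)).map_adj_iff (v := ⟨x, rfl⟩) (w := ⟨y, hxy⟩)
  · refine iff_of_false (fun hadj => hxy ?_)
      (fun hadj => hxy (SimpleGraph.ConnectedComponent.sound hadj.symm.reachable))
    rw [hψ _ x rfl, hψ _ y rfl] at hadj
    have h1 := (φ (H.connectedComponentMk x) ⟨x, rfl⟩).2
    have h2 := (φ (H.connectedComponentMk y) ⟨y, rfl⟩).2
    refine e.injective ?_
    exact h2.symm.trans ((SimpleGraph.ConnectedComponent.sound hadj.symm.reachable).trans h1)

/-- An isomorphism between rooted graphs with their roots deleted that respects adjacency to the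
roots extends to the rooted graphs. -/
theorem exists_iso_insert_root (F : SimpleGraph V) (F' : SimpleGraph V') (A : Set V) (A' : Set V')
    {r : V} {r' : V'} (hr : r ∈ A) (hr' : r' ∈ A')
    (ψ : F.induce (A \ {r}) ≃g F'.induce (A' \ {r'}))
    (hψ : ∀ x : ↑(A \ {r}), F.Adj r x ↔ F'.Adj r' (ψ x)) :
    ∃ φ : F.induce A ≃g F'.induce A', φ ⟨r, hr⟩ = ⟨r', hr'⟩ := by
  classical
  let φ : A ≃ A' :=
    { toFun := fun x => if h : (x : V) = r then ⟨r', hr'⟩ else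
        ⟨ψ ⟨x, x.2, h⟩, (ψ ⟨x, x.2, h⟩).2.1⟩
      invFun := fun x => if h : (x : V') = r' then ⟨r, hr⟩ else
        ⟨ψ.symm ⟨x, x.2, h⟩, (ψ.symm ⟨x, x.2, h⟩).2.1⟩
      left_inv := by
        intro x
        by_cases h : (x : V) = r
        · exact Subtype.ext (by simp [h])
        · have : ((ψ ⟨x, x.2, h⟩ : _) : V') ≠ r' := (ψ ⟨x, x.2, h⟩).2.2
          simp [h, this]
      right_inv := by
        intro x
        by_cases h : (x : V') = r'
        · exact Subtype.ext (by simp [h])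
        · have : ((ψ.symm ⟨x, x.2, h⟩ : _) : V) ≠ r := (ψ.symm ⟨x, x.2, h⟩).2.2
          simp [h, this] }
  have h1 : ∀ x : A, (x : V) = r → (φ x : V') = r' := by
    intro x h; simp [φ, h]
  have h2 : ∀ (x : A) (h : (x : V) ≠ r), (φ x : V') = ψ ⟨x, x.2, h⟩ := by
    intro x h; simp [φ, h]
  refine ⟨⟨φ, ?_⟩, Subtype.ext (h1 _ rfl)⟩
  intro x y
  change F'.Adj (φ x) (φ y) ↔ F.Adj x y
  by_cases hx : (x : V) = r <;> by_cases hy : (y : V) = r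
  · simp [h1 x hx, h1 y hy, hx, hy]
  · rw [h1 x hx, h2 y hy, hx]; exact (hψ ⟨y, y.2, hy⟩).symm
  · rw [h2 x hx, h1 y hy, hy, F'.adj_comm, F.adj_comm]; exact (hψ ⟨x, x.2, hx⟩).symm
  · rw [h2 x hx, h2 y hy]
    exact ψ.map_adj_iff (v := ⟨x, x.2, hx⟩) (w := ⟨y, y.2, hy⟩)

theorem card_components_eq {F : SimpleGraph V} (hF : F.IsAcyclic) (K : F.ConnectedComponent)
    {r : V} (hr : r ∈ K.supp) :
    Nat.card (F.induce (K.supp \ {r})).ConnectedComponent = Nat.card (F.neighborSet r) := by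
  symm
  have hmem : ∀ u : F.neighborSet r, (u : V) ∈ K.supp \ {r} := fun u =>
    ⟨(SimpleGraph.ConnectedComponent.sound (SimpleGraph.Adj.reachable u.2).symm).trans hr,
      (SimpleGraph.Adj.ne u.2).symm⟩
  refine Nat.card_eq_of_bijective
    (fun u => (F.induce (K.supp \ {r})).connectedComponentMk ⟨u, hmem u⟩) ⟨?_, ?_⟩
  · intro u v huv
    have := eq_of_adj_of_reachable hF K.supp r (u := ⟨u, hmem u⟩) (v := ⟨v, hmem v⟩) u.2 v.2
      (SimpleGraph.ConnectedComponent.exact huv)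
    exact Subtype.ext (congrArg (fun x : ↑(K.supp \ {r}) => (x : V)) this)
  · intro c
    obtain ⟨u, ⟨hu, hru⟩, -⟩ := existsUnique_neighbor hF K hr c
    exact ⟨⟨u, hru⟩, hu⟩

theorem isTree_of_mem_branchType {F : SimpleGraph V} (hF : F.IsAcyclic) {r : V} {S : Set V}
    {c : (F.induce S).ConnectedComponent} {p} (hp : p ∈ branchType F r S c) : p.2.1.IsTree := by
  obtain ⟨u, hu, φ, -, -⟩ := hp
  refine (SimpleGraph.Iso.isTree_iff φ).1 ⟨c.connected_toSimpleGraph, ?_⟩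
  exact (hF.induce S).induce c.supp

theorem card_of_mem_branchType {F : SimpleGraph V} {r : V} {S : Set V}
    {c : (F.induce S).ConnectedComponent} {p} (hp : p ∈ branchType F r S c) :
    Nat.card c.supp = p.1 := by
  obtain ⟨u, hu, φ, -, -⟩ := hp
  simpa using Nat.card_congr φ.toEquiv

/-- All one-vertex branches have the same rooted type. -/
theorem branchType_eq_of_card_eq_one {F : SimpleGraph V} {r : V} {S : Set V}
    {c : (F.induce S).ConnectedComponent} {p} (hp : p ∈ branchType F r S c) (h1 : p.1 = 1) :
    branchType F r S c = {p | p.1 = 1} := by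
  ext p'
  refine ⟨fun hp' => ?_, fun hp' => ?_⟩
  · exact (card_of_mem_branchType hp').symm.trans ((card_of_mem_branchType hp).trans h1)
  · obtain ⟨u, hu, φ, hru, -⟩ := hp
    obtain ⟨k, T, t⟩ := p
    obtain ⟨k', T', t'⟩ := p'
    obtain rfl : k = 1 := h1
    obtain rfl : k' = 1 := hp'
    obtain rfl : T = T' := Subsingleton.elim _ _
    exact ⟨u, hu, φ, hru, Subsingleton.elim _ _⟩

/-- The branches of a given rooted type, named by the branch `c'` of a possibly different graph,
are counted by `rootedCount` of any representative of that type. -/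
theorem card_branchType_fiber {G : SimpleGraph V} {r : V} {S : Set V}
    {G' : SimpleGraph V'} {r' : V'} {S' : Set V'}
    (h : ∀ c : (G.induce S).ConnectedComponent, ∃! u : S, u ∈ c.supp ∧ G.Adj r u)
    (h' : ∀ c : (G'.induce S').ConnectedComponent, ∃! u : S', u ∈ c.supp ∧ G'.Adj r' u)
    {c' : (G'.induce S').ConnectedComponent} {k : ℕ} {T : SimpleGraph (Fin k)} {t : Fin k}
    (hp' : ⟨k, T, t⟩ ∈ branchType G' r' S' c') :
    Nat.card {c // branchType G r S c = branchType G' r' S' c'} = rootedCount G r S T t := by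
  rw [rootedCount_eq]
  refine Nat.card_congr (Equiv.subtypeEquivRight fun c => ⟨fun hc => ?_, fun hc => ?_⟩)
  · rw [hc]; exact hp'
  · exact (branchType_eq_of_mem h' h hp' hc).symm

/-- A rooted component of a forest is determined up to rooted isomorphism by the degree of its
root and the multiplicities of its branches with at least two vertices. -/
theorem exists_rooted_iso [Finite V] [Finite V'] {F : SimpleGraph V} {F' : SimpleGraph V'}
    (hF : F.IsAcyclic) (hF' : F'.IsAcyclic) (K : F.ConnectedComponent)
    (K' : F'.ConnectedComponent) {r : V} {r' : V'} (hr : r ∈ K.supp) (hr' : r' ∈ K'.supp)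
    (Δ : ℕ) (hΔ : ∀ c : (F.induce (K.supp \ {r})).ConnectedComponent, Nat.card c.supp ≤ Δ)
    (hΔ' : ∀ c : (F'.induce (K'.supp \ {r'})).ConnectedComponent, Nat.card c.supp ≤ Δ)
    (hd : Nat.card (F.neighborSet r) = Nat.card (F'.neighborSet r'))
    (hcount : ∀ k : ℕ, 2 ≤ k → k ≤ Δ → ∀ T : SimpleGraph (Fin k), T.IsTree → ∀ t : Fin k,
      rootedCount F r (K.supp \ {r}) T t = rootedCount F' r' (K'.supp \ {r'}) T t) :
    ∃ φ : F.induce K.supp ≃g F'.induce K'.supp, φ ⟨r, hr⟩ = ⟨r', hr'⟩ := by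
  have hu := existsUnique_neighbor hF K hr
  have hu' := existsUnique_neighbor hF' K' hr'
  have hC : Finite (F.induce (K.supp \ {r})).ConnectedComponent := Quot.finite _
  have hC' : Finite (F'.induce (K'.supp \ {r'})).ConnectedComponent := Quot.finite _
  set f := branchType F r (K.supp \ {r}) with hf
  set f' := branchType F' r' (K'.supp \ {r'}) with hf'
  -- the class of the one-vertex tree, the only one whose multiplicity is not prescribed
  let q₀ : Set (Σ k : ℕ, SimpleGraph (Fin k) × Fin k) := {p | p.1 = 1}
  have hone : ∀ {c p}, p ∈ f c → p.1 = 1 → f c = q₀ := branchType_eq_of_card_eq_one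
  have hone' : ∀ {c p}, p ∈ f' c → p.1 = 1 → f' c = q₀ := branchType_eq_of_card_eq_one
  have hfib : ∀ q, q ≠ q₀ → Nat.card {c // f c = q} = Nat.card {c // f' c = q} := by
    intro q hq
    by_cases h1 : ∃ c, f c = q
    · obtain ⟨c, rfl⟩ := h1
      obtain ⟨⟨k, T, t⟩, hp⟩ := exists_mem_branchType hu c
      rw [card_branchType_fiber hu hu hp, card_branchType_fiber hu' hu hp]
      have hk : k ≠ 1 := fun hk => hq (hone hp hk)
      have hk' : k ≤ Δ := (card_of_mem_branchType hp).symm.le.trans (hΔ c)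
      exact hcount k (by have := t.2; omega) hk' T (isTree_of_mem_branchType hF hp) t
    by_cases h2 : ∃ c, f' c = q
    · obtain ⟨c, rfl⟩ := h2
      obtain ⟨⟨k, T, t⟩, hp⟩ := exists_mem_branchType hu' c
      rw [card_branchType_fiber hu hu' hp, card_branchType_fiber hu' hu' hp]
      have hk : k ≠ 1 := fun hk => hq (hone' hp hk)
      have hk' : k ≤ Δ := (card_of_mem_branchType hp).symm.le.trans (hΔ' c)
      exact hcount k (by have := t.2; omega) hk' T (isTree_of_mem_branchType hF' hp) t
    · have : IsEmpty {c // f c = q} := ⟨fun c => h1 ⟨c.1, c.2⟩⟩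
      have : IsEmpty {c // f' c = q} := ⟨fun c => h2 ⟨c.1, c.2⟩⟩
      simp
  have hcardC : Nat.card (F.induce (K.supp \ {r})).ConnectedComponent =
      Nat.card (F'.induce (K'.supp \ {r'})).ConnectedComponent := by
    rw [card_components_eq hF K hr, card_components_eq hF' K' hr', hd]
  obtain ⟨e, he⟩ := exists_equiv_of_card_fiber_eq f f' fun q => by
    by_cases hq : q = q₀
    · rw [hq]; exact card_fiber_eq_of_card_eq f f' hcardC q₀ hfib
    · exact hfib q hq
  have hiso : ∀ c, ∃ φ : (F.induce (K.supp \ {r})).induce c.supp ≃g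
      (F'.induce (K'.supp \ {r'})).induce (e c).supp,
      ∀ x, F.Adj r x.1 ↔ F'.Adj r' (φ x).1 := by
    intro c
    obtain ⟨p, hp⟩ := exists_mem_branchType hu c
    refine exists_iso_of_mem_branchType hu hu' hp (?_ : p ∈ f' (e c))
    rw [he c]; exact hp
  choose φ hφ using hiso
  obtain ⟨ψ, hψ⟩ := exists_iso_of_components _ _ e φ
  refine exists_iso_insert_root F F' K.supp K'.supp hr hr' ψ fun x => ?_
  rw [hψ _ x rfl]
  exact hφ _ ⟨x, rfl⟩

theorem rootedCount_le [Finite V] {F : SimpleGraph V} (hF : F.IsAcyclic)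
    (K : F.ConnectedComponent) {r : V} (hr : r ∈ K.supp) {k : ℕ} (T : SimpleGraph (Fin k))
    (t : Fin k) :
    rootedCount F r (K.supp \ {r}) T t ≤ Nat.card (F.neighborSet r) := by
  have hC : Finite (F.induce (K.supp \ {r})).ConnectedComponent := Quot.finite _
  rw [← card_components_eq hF K hr]
  exact Finite.card_subtype_le _

theorem card_neighborSet_induce (F : SimpleGraph V) (K : F.ConnectedComponent) {r : V}
    (hr : r ∈ K.supp) :
    Nat.card ((F.induce K.supp).neighborSet ⟨r, hr⟩) = Nat.card (F.neighborSet r) := by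
  refine Nat.card_eq_of_bijective (fun u => ⟨u.1.1, u.2⟩) ⟨?_, ?_⟩
  · intro u v huv
    exact Subtype.ext (Subtype.ext (congrArg (fun x => x.1) huv))
  · intro u
    exact ⟨⟨⟨u, (SimpleGraph.ConnectedComponent.sound
      (SimpleGraph.Adj.reachable u.2).symm).trans hr⟩, u.2⟩, rfl⟩

end Gluing

/-! ### Codes of clean components -/

section Codes

/-- A multiplicity vector: for each rooted graph on at most `Δ` vertices, a number at most `B`,
counting branches of that type in units of `branchDivisor`. -/
abbrev BranchCode (Δ B : ℕ) : Type :=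
  (Σ k : Fin (Δ + 1), SimpleGraph (Fin k) × Fin k) → Fin (B + 1)

/-- `x` records the root degree of `(K, r)` together with the multiplicities of its branches that
are trees on at least two vertices; the remaining entries of `x` are arbitrary. -/
def HasCode (ε : ℝ) (Δ : ℕ) {B : ℕ} {V : Type u} (F : SimpleGraph V)
    (K : F.ConnectedComponent) (r : V) (x : ℕ × BranchCode Δ B) : Prop :=
  Nat.card (F.neighborSet r) = x.1 ∧ ∀ p : Σ k : Fin (Δ + 1), SimpleGraph (Fin k) × Fin k,
    2 ≤ (p.1 : ℕ) → p.2.1.IsTree →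
      rootedCount F r (K.supp \ {r}) p.2.1 p.2.2 = branchDivisor ε Δ x.1 * x.2 p

/-- `x` is the code of a clean rooted component of some forest of order `n`. -/
def IsRealizedCode (ε : ℝ) (Δ : ℕ) {B : ℕ} (n : ℕ) (x : ℕ × BranchCode Δ B) : Prop :=
  ∃ (V : Type u) (_ : Fintype V) (F : SimpleGraph V) (K : F.ConnectedComponent) (r : V),
    Fintype.card V = n ∧ F.IsAcyclic ∧ IsCleanRoot ε Δ F K r ∧ HasCode ε Δ F K r x

theorem exists_hasCode {ε : ℝ} {Δ B : ℕ}
    (hB : ∀ d j : ℕ, branchDivisor ε Δ d * j ≤ d → j ≤ B) {V : Type u} [Finite V]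
    {F : SimpleGraph V} (hF : F.IsAcyclic) {K : F.ConnectedComponent} {r : V}
    (h : IsCleanRoot ε Δ F K r) : ∃ x : ℕ × BranchCode Δ B, HasCode ε Δ F K r x := by
  have key : ∀ p : Σ k : Fin (Δ + 1), SimpleGraph (Fin k) × Fin k, ∃ j : Fin (B + 1),
      2 ≤ (p.1 : ℕ) → p.2.1.IsTree → rootedCount F r (K.supp \ {r}) p.2.1 p.2.2 =
        branchDivisor ε Δ (Nat.card (F.neighborSet r)) * j := by
    intro p
    by_cases hp : 2 ≤ (p.1 : ℕ) ∧ p.2.1.IsTree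
    · obtain ⟨j, hj⟩ := h.2.2.2 p.1 hp.1 p.2.1 hp.2 p.2.2
      have hj' : j ≤ B := hB _ j (hj ▸ rootedCount_le hF K h.1 p.2.1 p.2.2)
      exact ⟨⟨j, by omega⟩, fun _ _ => hj⟩
    · exact ⟨0, fun h1 h2 => absurd ⟨h1, h2⟩ hp⟩
  choose j hj using key
  exact ⟨(Nat.card (F.neighborSet r), j), rfl, hj⟩

theorem IsRealizedCode.fst_mem {ε : ℝ} {Δ B n : ℕ} {x : ℕ × BranchCode Δ B}
    (h : IsRealizedCode.{u} ε Δ n x) : x.1 ∈ admissibleDegrees ε Δ ∧ x.1 ≤ n := by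
  obtain ⟨V, _, F, K, r, hn, -, hr, hd, -⟩ := h
  refine ⟨hd ▸ hr.2.2.1, ?_⟩
  rw [← hd, ← hn, ← Nat.card_eq_fintype_card]
  exact Finite.card_subtype_le _

theorem card_neighborSet_of_iso {W W' : Type*} {G : SimpleGraph W} {G' : SimpleGraph W'}
    (φ : G ≃g G') {w : W} {w' : W'} (h : φ w = w') :
    Nat.card (G'.neighborSet w') = Nat.card (G.neighborSet w) := by
  subst h
  exact (Nat.card_congr (φ.mapNeighborSet w)).symm

/-- Each realized code has a single rooted tree as representative: by `exists_rooted_iso`, all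
clean rooted components with that code are isomorphic to it. -/
theorem exists_representative {ε : ℝ} {Δ B n : ℕ} {x : ℕ × BranchCode Δ B}
    (h : IsRealizedCode.{u} ε Δ n x) :
    ∃ (m : ℕ) (T : SimpleGraph (Fin m)) (t : Fin m), T.IsTree ∧
      Nat.card (T.neighborSet t) = x.1 ∧
      ∀ (V : Type u) (_ : Fintype V) (F : SimpleGraph V), F.IsAcyclic →
        ∀ (K : F.ConnectedComponent) (r : V), IsCleanRoot ε Δ F K r → HasCode ε Δ F K r x →
          ∃ (φ : F.induce K.supp ≃g T) (hr : r ∈ K.supp), φ ⟨r, hr⟩ = t := by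
  obtain ⟨V, _, F, K, r, -, hF, hr, hx⟩ := h
  obtain e := Finite.equivFin K.supp
  let φ := SimpleGraph.Iso.map e (F.induce K.supp)
  refine ⟨_, (F.induce K.supp).map e, e ⟨r, hr.1⟩, ?_, ?_, ?_⟩
  · exact (SimpleGraph.Iso.isTree_iff φ).1 ⟨K.connected_toSimpleGraph, hF.induce K.supp⟩
  · exact (card_neighborSet_of_iso φ rfl).trans ((card_neighborSet_induce F K hr.1).trans hx.1)
  · intro V' _ F' hF' K' r' hr' hx'
    obtain ⟨ψ, hψ⟩ := exists_rooted_iso hF' hF K' K hr'.1 hr.1 Δ hr'.2.1 hr.2.1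
      (hx'.1.trans hx.1.symm) fun k hk hkΔ T hT t =>
        (hx'.2 ⟨⟨k, by omega⟩, T, t⟩ hk hT).trans (hx.2 ⟨⟨k, by omega⟩, T, t⟩ hk hT).symm
    exact ⟨ψ.trans φ, hr'.1, congrArg φ hψ⟩

theorem card_le_card_image_fst_mul {J : Type*} [Fintype J] (P : Finset (ℕ × J)) :
    P.card ≤ (P.image Prod.fst).card * Fintype.card J := by
  classical
  rw [← Finset.card_univ, ← Finset.card_product]
  exact Finset.card_le_card fun x hx =>
    Finset.mem_product.2 ⟨Finset.mem_image_of_mem _ hx, Finset.mem_univ _⟩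

end Codes

/-- For every `ε ∈ (0,1)` there are positive integers `c₁` and `c₂` such that for every
`n ≥ 2` there is a set `S(ε,n)` of at most `c₁·log n` rooted trees such that every
component of every `(ε,⌈1/ε⌉)`-clean forest of order `n`, rooted at its designated
root, is isomorphic as a rooted tree to a member of `S(ε,n)`; moreover, in any linear
ordering of `S(ε,n)` with non-decreasing root degrees `d_i`, one has `d_i ≤ ε·d_j`
whenever `j ≥ i + c₂`. -/
theorem clean_components_few_types (ε : ℝ) (hε : ε ∈ Set.Ioo (0 : ℝ) 1) :
    ∃ c₁ c₂ : ℕ, 0 < c₁ ∧ 0 < c₂ ∧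
      ∀ n : ℕ, 2 ≤ n →
        ∃ (q : ℕ) (nS : Fin q → ℕ) (S : ∀ i, SimpleGraph (Fin (nS i)))
          (root : ∀ i, Fin (nS i)),
          (∀ i, (S i).IsTree) ∧
          (q : ℝ) ≤ c₁ * Real.log n ∧
          (∀ (V : Type u) (_ : Fintype V) (F : SimpleGraph V),
            Fintype.card V = n → F.IsAcyclic → IsClean ε ⌈1 / ε⌉₊ F →
            ∀ (K : F.ConnectedComponent) (r : V),
              IsCleanRoot ε ⌈1 / ε⌉₊ F K r →
              ∃ (i : Fin q) (φ : F.induce K.supp ≃g S i) (hr : r ∈ K.supp),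
                φ ⟨r, hr⟩ = root i) ∧
          (∀ σ : Equiv.Perm (Fin q),
            Monotone (fun i => Nat.card ((S (σ i)).neighborSet (root (σ i)))) →
            ∀ i j : Fin q, (i : ℕ) + c₂ ≤ (j : ℕ) →
              (Nat.card ((S (σ i)).neighborSet (root (σ i))) : ℝ) ≤
                ε * Nat.card ((S (σ j)).neighborSet (root (σ j)))) := by
  classical
  have hΔ : 0 < ⌈1 / ε⌉₊ := Nat.ceil_pos.2 (one_div_pos.2 hε.1)
  set Δ := ⌈1 / ε⌉₊
  obtain ⟨C₁, hC₁, hlog⟩ := exists_card_le_mul_log hε Δ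
  obtain ⟨C₂, hC₂, hwin⟩ := exists_card_window_le hε Δ
  obtain ⟨B, hB⟩ := exists_quotient_le hε Δ hΔ
  have hM : 0 < Fintype.card (BranchCode Δ B) := Fintype.card_pos
  set M := Fintype.card (BranchCode Δ B) with hMdef
  refine ⟨C₁ * M, C₂ * M, Nat.mul_pos hC₁ hM, Nat.mul_pos hC₂ hM, fun n hn => ?_⟩
  let P : Finset (ℕ × BranchCode Δ B) :=
    (Finset.range (n + 1) ×ˢ Finset.univ).filter (IsRealizedCode.{u} ε Δ n)
  have hP : ∀ x, x ∈ P ↔ IsRealizedCode.{u} ε Δ n x := fun x =>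
    ⟨fun hx => (Finset.mem_filter.1 hx).2, fun hx => Finset.mem_filter.2
      ⟨Finset.mem_product.2 ⟨Finset.mem_range.2 (Nat.lt_succ_of_le hx.fst_mem.2),
        Finset.mem_univ _⟩, hx⟩⟩
  let e : Fin P.card ≃ P := P.equivFin.symm
  choose nS S root hS hdeg hiso using
    fun i : Fin P.card => exists_representative ((hP _).1 (e i).2)
  refine ⟨P.card, nS, S, root, hS, ?_, ?_, ?_⟩
  · have h1 := hlog n hn (P.image Prod.fst) fun d hd => by
      obtain ⟨x, hx, rfl⟩ := Finset.mem_image.1 hd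
      exact ((hP x).1 hx).fst_mem
    have h2 : (P.card : ℝ) ≤ (P.image Prod.fst).card * M := by
      exact_mod_cast card_le_card_image_fst_mul P
    calc (P.card : ℝ) ≤ (P.image Prod.fst).card * M := h2
      _ ≤ (C₁ * Real.log n) * M := by gcongr
      _ = _ := by push_cast; ring
  · intro V _ F hVn hF _ K r hr
    obtain ⟨x, hx⟩ := exists_hasCode hB hF hr
    have hxP : x ∈ P := (hP x).2 ⟨V, inferInstance, F, K, r, hVn, hF, hr, hx⟩
    refine ⟨e.symm ⟨x, hxP⟩, hiso _ V inferInstance F hF K r hr ?_⟩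
    rw [Equiv.apply_symm_apply]
    exact hx
  · intro σ hσ i j hij
    by_contra! hlt
    simp only [hdeg] at hσ hlt
    -- every tree between positions `i` and `j` has its degree in the window `[d_i, d_i / ε)`
    let Q : Finset (ℕ × BranchCode Δ B) := (Finset.Icc i j).image fun k => (e (σ k)).1
    have hQ : Q.card = j + 1 - i := by
      rw [← Fin.card_Icc]
      exact Finset.card_image_of_injective _
        (Subtype.val_injective.comp (e.injective.comp σ.injective))
    have hQ2 : (Q.image Prod.fst).card ≤ C₂ := by
      refine hwin (e (σ i)).1.1 _ fun d hd => ?_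
      obtain ⟨x, hx, rfl⟩ := Finset.mem_image.1 hd
      obtain ⟨k, hk, rfl⟩ := Finset.mem_image.1 hx
      obtain ⟨hik, hkj⟩ := Finset.mem_Icc.1 hk
      refine ⟨((hP _).1 (e (σ k)).2).fst_mem.1, hσ hik, lt_of_le_of_lt ?_ hlt⟩
      have : (((e (σ k)).1.1 : ℕ) : ℝ) ≤ (e (σ j)).1.1 := by exact_mod_cast hσ hkj
      exact mul_le_mul_of_nonneg_left this hε.1.le
    have hQ3 : Q.card ≤ C₂ * M :=
      (card_le_card_image_fst_mul Q).trans (Nat.mul_le_mul_right _ hQ2)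
    omega
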